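/- arXiv:1612.02982 — 2 statements merged into one kernel-verified Lean document; each statement's English description precedes it below -/
import Mathlib

section
/- Let A ⊆ 2^ω be μ-measurable, let n ∈ ℕ, and set A_n = {s ∈ 2^{<ω} : μ(A ∩ U_s) > (1 − 2^{-n})·2^{-|s|}}. Suppose A* ⊆ A_n has the property that every element of A_n has an initial segment belonging to A* (for instance, A* may be taken to be the set of all elements of A_n having no proper initial segment in A_n, which forms an antichain). Then μ(A ∩ ⋃_{s∈A*} U_s) = μ(A), i.e. μ(A \ ⋃_{s∈A*} U_s) = 0. -/
open MeasureTheory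
open scoped ENNReal

/-- The basic cylinder `U_s ⊆ 2^ω` determined by a finite binary string `s`:
the set of all `x : ℕ → Bool` having `s` as an initial segment. -/
def cylinder (s : List Bool) : Set (ℕ → Bool) :=
  {x | ∀ i : ℕ, ∀ h : i < s.length, x i = s.get ⟨i, h⟩}

/-- The set `A_n` of finite binary strings `s` on which the measurable set `A` has
relative measure greater than `1 - 2^{-n}`, i.e.
`μ (A ∩ U_s) > (1 - 2^{-n}) · 2^{-|s|}`. -/
def densityLevel (μ : Measure (ℕ → Bool)) (A : Set (ℕ → Bool)) (n : ℕ) :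
    Set (List Bool) :=
  {s | (1 - (1 / 2 : ℝ≥0∞) ^ n) * (1 / 2 : ℝ≥0∞) ^ s.length < μ (A ∩ cylinder s)}

theorem cylinder_ofFn (x : ℕ → Bool) (k : ℕ) :
    cylinder (List.ofFn fun i : Fin k => x i) = PiNat.cylinder x k := by
  ext y
  simp [_root_.cylinder, PiNat.cylinder]

theorem isOpen_cyl (s : List Bool) : IsOpen (cylinder s) := by
  have : cylinder s = ⋂ i : Fin s.length, (fun x : ℕ → Bool => x i) ⁻¹' {s.get i} := by
    ext x
    simp [_root_.cylinder, Fin.forall_iff]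
  rw [this]
  exact isOpen_iInter_of_finite fun i => (isOpen_discrete _).preimage (continuous_apply _)

theorem prefix_of_mem {s t : List Bool} {x : ℕ → Bool} (hs : x ∈ cylinder s)
    (ht : x ∈ cylinder t) (h : s.length ≤ t.length) : s <+: t := by
  rw [List.prefix_iff_getElem]
  refine ⟨h, fun i hi => ?_⟩
  have h1 := hs i hi
  have h2 := ht i (by omega)
  simp only [List.get_eq_getElem] at h1 h2
  rw [← h1, ← h2]

theorem cylinder_anti {s t : List Bool} (h : s <+: t) : cylinder t ⊆ cylinder s := by
  intro x hx i hi
  rw [List.prefix_iff_getElem] at h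
  obtain ⟨h1, h2⟩ := h
  rw [hx i (by omega)]
  simp [h2 i hi]

/-- The minimal cylinders inside a set. -/
def minStrings (V : Set (ℕ → Bool)) : Set (List Bool) :=
  {s | cylinder s ⊆ V ∧ ∀ t, t <+: s → cylinder t ⊆ V → t = s}

theorem iUnion_minStrings {V : Set (ℕ → Bool)} (hV : IsOpen V) :
    ⋃ s ∈ minStrings V, cylinder s = V := by
  classical
  apply Set.Subset.antisymm
  · exact Set.iUnion₂_subset fun s hs => hs.1
  · intro x hx
    have hex : ∃ k, cylinder (List.ofFn fun i : Fin k => x i) ⊆ V := by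
      obtain ⟨u, ⟨y, k, rfl⟩, hxu, huV⟩ :=
        (PiNat.isTopologicalBasis_cylinders (fun _ : ℕ => Bool)).exists_subset_of_mem_open hx hV
      refine ⟨k, ?_⟩
      rw [cylinder_ofFn]
      rw [PiNat.mem_cylinder_iff_eq.1 hxu]
      exact huV
    have hmem : ∀ k, x ∈ cylinder (List.ofFn fun i : Fin k => x i) := by
      intro k
      rw [cylinder_ofFn]
      exact PiNat.self_mem_cylinder x k
    refine Set.mem_iUnion₂.2 ⟨_, ⟨Nat.find_spec hex, fun t ht htV => ?_⟩, hmem _⟩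
    refine ht.eq_of_length_le ?_
    rw [List.length_ofFn]
    apply Nat.find_min'
    have h1 : x ∈ cylinder t := cylinder_anti ht (hmem _)
    have h2 : (List.ofFn fun i : Fin t.length => x i) = t :=
      (prefix_of_mem (hmem _) h1 (by simp)).eq_of_length (by simp)
    rw [h2]
    exact htV

theorem disjoint_minStrings (V : Set (ℕ → Bool)) :
    (minStrings V).PairwiseDisjoint cylinder := by
  intro s hs t ht hne
  refine Set.disjoint_left.2 fun x hxs hxt => hne ?_
  rcases le_total s.length t.length with h | h
  · exact ht.2 s (prefix_of_mem hxs hxt h) hs.1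
  · exact (hs.2 t (prefix_of_mem hxt hxs h) ht.1).symm

theorem null_of_cyl_bound (μ : Measure (ℕ → Bool)) [IsProbabilityMeasure μ]
    (B : Set (ℕ → Bool)) (c : ℝ≥0∞) (hc : c < 1)
    (h : ∀ s, μ (B ∩ cylinder s) ≤ c * μ (cylinder s)) : μ B = 0 := by
  have key : ∀ V, IsOpen V → B ⊆ V → μ B ≤ c * μ V := by
    intro V hV hBV
    have hcount : (minStrings V).Countable := Set.to_countable _
    calc μ B = μ (⋃ s ∈ minStrings V, B ∩ cylinder s) := by
          rw [← Set.inter_iUnion₂, iUnion_minStrings hV, Set.inter_eq_left.2 hBV]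
      _ ≤ ∑' s : minStrings V, μ (B ∩ cylinder s) := measure_biUnion_le μ hcount _
      _ ≤ ∑' s : minStrings V, c * μ (cylinder s) := ENNReal.tsum_le_tsum fun s => h s
      _ = c * μ V := by
          rw [ENNReal.tsum_mul_left, ← measure_biUnion hcount (disjoint_minStrings V)
            (fun s _ => (isOpen_cyl s).measurableSet), iUnion_minStrings hV]
  by_contra hB
  have hle : μ B ≤ c * μ B := by
    rcases eq_or_ne c 0 with rfl | hc0
    · simpa using key Set.univ isOpen_univ (Set.subset_univ _)
    · have hd : μ B / c ≤ μ B := by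
        conv_rhs => rw [B.measure_eq_iInf_isOpen μ]
        refine le_iInf₂ fun V hBV => le_iInf fun hV => ?_
        rw [ENNReal.div_le_iff_le_mul (Or.inl hc0) (Or.inl hc.ne_top), mul_comm]
        exact key V hV hBV
      rwa [ENNReal.div_le_iff_le_mul (Or.inl hc0) (Or.inl hc.ne_top), mul_comm] at hd
  have := ENNReal.mul_lt_mul_left hB (measure_ne_top μ B) hc
  rw [one_mul] at this
  exact absurd hle (not_le.2 this)

/-- Let `A ⊆ 2^ω` be `μ`-measurable (with `μ` the fair-coin measure),
`n ∈ ℕ`, and `A_n = {s : μ (A ∩ U_s) > (1 - 2^{-n}) · 2^{-|s|}}`.  If `A* ⊆ A_n` is such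
that every element of `A_n` has an initial segment in `A*`, then
`μ (A ∩ ⋃_{s ∈ A*} U_s) = μ A`, i.e. `μ (A \ ⋃_{s ∈ A*} U_s) = 0`. -/
theorem measure_inter_union_cylinders_of_densityLevel
    (μ : Measure (ℕ → Bool)) [IsProbabilityMeasure μ]
    (hμ : ∀ s : List Bool, μ (cylinder s) = (1 / 2 : ℝ≥0∞) ^ s.length)
    (A : Set (ℕ → Bool)) (hA : NullMeasurableSet A μ) (n : ℕ)
    (Astar : Set (List Bool))
    (hsub : Astar ⊆ densityLevel μ A n)
    (hcov : ∀ s ∈ densityLevel μ A n, ∃ t ∈ Astar, t <+: s) :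
    μ (A ∩ ⋃ s ∈ Astar, cylinder s) = μ A ∧ μ (A \ ⋃ s ∈ Astar, cylinder s) = 0 := by
  have h0 : μ (A \ ⋃ s ∈ Astar, cylinder s) = 0 := by
    refine null_of_cyl_bound μ _ (1 - (1 / 2 : ℝ≥0∞) ^ n)
      (ENNReal.sub_lt_self ENNReal.one_ne_top one_ne_zero (by simp)) fun s => ?_
    by_cases hs : s ∈ densityLevel μ A n
    · obtain ⟨t, ht, hts⟩ := hcov s hs
      have : (A \ ⋃ s ∈ Astar, cylinder s) ∩ cylinder s = ∅ := by
        ext x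
        simp only [Set.mem_inter_iff, Set.mem_sdiff, Set.mem_empty_iff_false, iff_false]
        rintro ⟨⟨-, h1⟩, h2⟩
        exact h1 (Set.mem_iUnion₂.2 ⟨t, ht, cylinder_anti hts h2⟩)
      rw [this, measure_empty]
      exact zero_le
    · rw [hμ]
      exact (measure_mono (Set.inter_subset_inter_left _ Set.sdiff_subset)).trans (not_lt.1 hs)
  exact ⟨le_antisymm (measure_mono Set.inter_subset_left)
    ((measure_le_inter_add_sdiff μ A _).trans (by rw [h0, add_zero])), h0⟩
end

section
/- Let ε > 0 and let P ⊆ 2^ω × 2^ω be measurable for the product measure μ⊗μ. Let ⟨A_s⟩_{s∈2^{<ω}} and ⟨B_s⟩_{s∈2^{<ω}} be families of μ-measurable subsets of 2^ω such that: (i) A_t ⊆ A_s whenever s is an initial segment of t; (ii) μ(⋂_{n∈ℕ} A_{x↾n}) = 0 for every x ∈ 2^ω; (iii) ∑_{s∈2^n} μ(B_s) ≤ 1 for every n ∈ ℕ (the sum ranging over all binary strings of length n); and (iv) (μ⊗μ)(P \ ⋃_{s∈2^n} (A_s × B_s)) = 0 for every n ∈ ℕ. Then (μ⊗μ)(P)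 = 0. -/
open MeasureTheory
open scoped ENNReal

/-- Koenig-type compactness argument: at some level all the `A_s` are small. -/
lemma exists_level_small (μ : Measure (ℕ → Bool)) [IsProbabilityMeasure μ]
    (A : List Bool → Set (ℕ → Bool))
    (hAmeas : ∀ s : List Bool, NullMeasurableSet (A s) μ)
    (hmono : ∀ s t : List Bool, s <+: t → A t ⊆ A s)
    (hnull : ∀ x : ℕ → Bool, μ (⋂ n : ℕ, A (List.ofFn fun i : Fin n => x i)) = 0)
    (δ : ℝ≥0∞) (hδ : 0 < δ) : ∃ n : ℕ, ∀ s : List Bool, s.length = n → μ (A s) ≤ δ := by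
  by_contra! hcon
  have hpre : ∀ (x : ℕ → Bool) (m n : ℕ), m ≤ n →
      (List.ofFn fun i : Fin m => x i) <+: (List.ofFn fun i : Fin n => x i) := by
    intro x m n hmn
    rw [List.prefix_iff_eq_take]
    apply List.ext_getElem
    · simp [hmn]
    · intro i h1 h2
      simp
  have hanti : ∀ x : ℕ → Bool, Antitone fun n : ℕ => A (List.ofFn fun i : Fin n => x i) :=
    fun x m n hmn => hmono _ _ (hpre x m n hmn)
  let C : ℕ → Set (ℕ → Bool) := fun n => {x | δ ≤ μ (A (List.ofFn fun i : Fin n => x i))}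
  have hclosed : ∀ n, IsClosed (C n) := by
    intro n
    have hc : Continuous (fun (x : ℕ → Bool) (i : Fin n) => x i) := by fun_prop
    exact (isClosed_discrete {g : Fin n → Bool | δ ≤ μ (A (List.ofFn g))}).preimage hc
  have hne : (⋂ n, C n).Nonempty := by
    apply IsCompact.nonempty_iInter_of_sequence_nonempty_isCompact_isClosed C
    · intro n x hx
      exact le_trans (show δ ≤ _ from hx) (measure_mono (hanti x (Nat.le_succ n)))
    · intro n
      obtain ⟨s, hs, h⟩ := hcon n
      refine ⟨fun i => s.getD i false, ?_⟩
      have : (List.ofFn fun i : Fin n => s.getD i false) = s := by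
        apply List.ext_getElem
        · simp [hs]
        · intro i h1 h2
          simp [h2]
      change δ ≤ μ (A (List.ofFn fun i : Fin n => s.getD i false))
      rw [this]
      exact h.le
    · exact (hclosed 0).isCompact
    · exact hclosed
  obtain ⟨x, hx⟩ := hne
  have h0 := hnull x
  rw [(hanti x).measure_iInter (fun n => hAmeas _) ⟨0, measure_ne_top _ _⟩] at h0
  have : δ ≤ ⨅ n : ℕ, μ (A (List.ofFn fun i : Fin n => x i)) :=
    le_iInf fun n => Set.mem_iInter.1 hx n
  rw [h0] at this
  exact absurd this (not_le.2 hδ)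

/-- Let `ε > 0` and let `P ⊆ 2^ω × 2^ω` be measurable for the product
measure `μ ⊗ μ` (with `μ` the fair-coin measure on `2^ω`).  Let `⟨A_s⟩` and `⟨B_s⟩` be
families of `μ`-measurable subsets of `2^ω` such that:
(i) `A_t ⊆ A_s` whenever `s` is an initial segment of `t`;
(ii) `μ (⋂ n, A_{x↾n}) = 0` for every `x ∈ 2^ω`;
(iii) `∑_{s ∈ 2^n} μ (B_s) ≤ 1` for every `n`;
(iv) `(μ ⊗ μ) (P \ ⋃_{s ∈ 2^n} (A_s × B_s)) = 0` for every `n`.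
Then `(μ ⊗ μ) P = 0`. -/
theorem prod_measure_null_of_rectangle_covers
    (μ : Measure (ℕ → Bool)) [IsProbabilityMeasure μ]
    (hμ : ∀ s : List Bool, μ (cylinder s) = (1 / 2 : ℝ≥0∞) ^ s.length)
    (ε : ℝ) (hε : 0 < ε)
    (P : Set ((ℕ → Bool) × (ℕ → Bool)))
    (hP : NullMeasurableSet P (μ.prod μ))
    (A B : List Bool → Set (ℕ → Bool))
    (hAmeas : ∀ s : List Bool, NullMeasurableSet (A s) μ)
    (hBmeas : ∀ s : List Bool, NullMeasurableSet (B s) μ)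
    (hmono : ∀ s t : List Bool, s <+: t → A t ⊆ A s)
    (hnull : ∀ x : ℕ → Bool, μ (⋂ n : ℕ, A (List.ofFn fun i : Fin n => x i)) = 0)
    (hBsum : ∀ n : ℕ, (∑' s : {s : List Bool // s.length = n}, μ (B s.1)) ≤ 1)
    (hcov : ∀ n : ℕ,
      (μ.prod μ) (P \ ⋃ s : {s : List Bool // s.length = n}, A s.1 ×ˢ B s.1) = 0) :
    μ.prod μ P = 0 := by
  refine le_antisymm (le_of_forall_pos_le_add fun δ hδ => ?_) zero_le
  rw [zero_add]
  obtain ⟨n, hn⟩ := exists_level_small μ A hAmeas hmono hnull δ hδ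
  have : Countable {s : List Bool // s.length = n} := inferInstance
  calc μ.prod μ P
      ≤ μ.prod μ (P \ ⋃ s : {s : List Bool // s.length = n}, A s.1 ×ˢ B s.1)
        + μ.prod μ (⋃ s : {s : List Bool // s.length = n}, A s.1 ×ˢ B s.1) := by
        refine le_trans (measure_mono ?_) (measure_union_le _ _)
        rw [Set.diff_union_self]
        exact Set.subset_union_left
    _ = μ.prod μ (⋃ s : {s : List Bool // s.length = n}, A s.1 ×ˢ B s.1) := by
        rw [hcov n, zero_add]
    _ ≤ ∑' s : {s : List Bool // s.length = n}, μ.prod μ (A s.1 ×ˢ B s.1) :=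
        measure_iUnion_le _
    _ ≤ ∑' s : {s : List Bool // s.length = n}, δ * μ (B s.1) := by
        refine ENNReal.tsum_le_tsum fun s => ?_
        rw [Measure.prod_prod]
        gcongr
        exact hn s.1 s.2
    _ = δ * ∑' s : {s : List Bool // s.length = n}, μ (B s.1) := ENNReal.tsum_mul_left
    _ ≤ δ * 1 := by
        gcongr
        exact hBsum n
    _ = δ := mul_one δ
end
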